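/- Let X ⊆ ℙⁿ(𝔽) be an irreducible nondegenerate projective variety over an algebraically closed field 𝔽 of characteristic zero. Suppose the secant variety σ_k(X) has codimension c in ℙⁿ, and let s be the maximum X-rank of points lying on σ_k(X). Then the maximum X-rank satisfies r_max ≤ max{s, (c+1)·k}. -/

import Mathlib

/-!
Replacing `X` by the cone over the sums of `k` of its points, we are given a cone `T`, the image
of an irreducible variety, and a vector `v` outside its closure. Add lines spanned by points of
`T` to it. If the closure grows and still avoids `v`, its dimension has increased at the cost of
one summand, so this happens at most `c` times. Otherwise, as `T` spans the space, `v` lies in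
the closure of `T + F z` for every general `z ∈ T`. The claim is that then `v ∈ T + T`.

Suppose that `v` lies in the closure of the join of `T` and `z`. By the projective extension
theorem, either `v = x + t z` with `x` in the closure of `T`, or `v` is tangent to `T` at `z`. Some
equation `f` of `T` has a derivative in the direction of `v` which is nonzero at a general point
`z`, by Euler's identity in characteristic zero; this excludes the second case. Finally `T`
contains a nonempty open subset of its closure (Chevalley), and the projection along `v` is finite
on the closure of `T`, so for general `z` no point of its fibre lies outside `T`. In particular
`-t⁻¹ x = z - t⁻¹ v` lies in `T`, and with it `x`.
-/

open MvPolynomial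

/-- The zero locus in affine space `σ → F` of a set `I` of polynomials. -/
def zLocus {F : Type*} [CommSemiring F] {σ : Type*} (I : Set (MvPolynomial σ F)) :
    Set (σ → F) :=
  {x | ∀ p ∈ I, eval x p = 0}

/-- A subset of affine space is Zariski closed if it is the zero locus of a set of
polynomials. -/
def IsZClosed {F : Type*} [CommSemiring F] {σ : Type*} (S : Set (σ → F)) : Prop :=
  ∃ I : Set (MvPolynomial σ F), S = zLocus I

/-- Zariski open subsets of affine space. -/
def IsZOpen {F : Type*} [CommSemiring F] {σ : Type*} (S : Set (σ → F)) : Prop :=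
  IsZClosed Sᶜ

/-- Zariski dense subsets of affine space. -/
def IsZDense {F : Type*} [CommSemiring F] {σ : Type*} (S : Set (σ → F)) : Prop :=
  ∀ C : Set (σ → F), IsZClosed C → S ⊆ C → C = Set.univ

/-- Irreducibility with respect to the Zariski topology. -/
def IsZIrreducible {F : Type*} [CommSemiring F] {σ : Type*} (S : Set (σ → F)) : Prop :=
  S.Nonempty ∧ ∀ C₁ C₂ : Set (σ → F), IsZClosed C₁ → IsZClosed C₂ →
    S ⊆ C₁ ∪ C₂ → (S ⊆ C₁ ∨ S ⊆ C₂)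

/-- An affine cone: a subset closed under scalar multiplication. -/
def IsCone {F : Type*} [CommSemiring F] {σ : Type*} (S : Set (σ → F)) : Prop :=
  ∀ (c : F), ∀ x ∈ S, c • x ∈ S

/-- The set of vectors expressible as a sum of exactly `r` elements of `S`. -/
def sumsOf {F : Type*} [CommSemiring F] {σ : Type*} (S : Set (σ → F)) (r : ℕ) :
    Set (σ → F) :=
  {v | ∃ f : Fin r → (σ → F), (∀ i, f i ∈ S) ∧ ∑ i, f i = v}

/-- The `X`-rank of a vector with respect to the affine cone `S`: the least number of
elements of `S` summing to it (`⊤` if there is no such decomposition). -/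
noncomputable def xRank {F : Type*} [CommSemiring F] {σ : Type*} (S : Set (σ → F))
    (v : σ → F) : ℕ∞ :=
  sInf {r : ℕ∞ | ∃ s : ℕ, r = s ∧ v ∈ sumsOf S s}

/-- The Zariski closure of a subset of affine space. -/
def zClosure {F : Type*} [CommSemiring F] {σ : Type*} (S : Set (σ → F)) : Set (σ → F) :=
  ⋂₀ {C : Set (σ → F) | IsZClosed C ∧ S ⊆ C}

/-- The (affine cone over the) `r`-th secant variety: the Zariski closure of the set of
points of `X`-rank at most `r`. -/
noncomputable def secantCone {F : Type*} [CommSemiring F] {σ : Type*}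
    (Xhat : Set (σ → F)) (r : ℕ) : Set (σ → F) :=
  zClosure {v | xRank Xhat v ≤ (r : ℕ∞)}

/-- The dimension of a subset of affine space: the Krull dimension of the poset of
irreducible Zariski closed subsets contained in it. -/
noncomputable def zDim {F : Type*} [CommSemiring F] {σ : Type*} (S : Set (σ → F)) :
    WithBot ℕ∞ :=
  Order.krullDim {C : Set (σ → F) // IsZClosed C ∧ IsZIrreducible C ∧ C ⊆ S}

section Closure
variable {F : Type*} [Field F] {σ : Type*}

lemma isZClosed_setOf_eval_eq_zero (p : MvPolynomial σ F) : IsZClosed {x | eval x p = 0} :=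
  ⟨{p}, by ext; simp [zLocus]⟩

lemma mem_zClosure {S : Set (σ → F)} {v : σ → F} :
    v ∈ zClosure S ↔ ∀ p ∈ vanishingIdeal F S, eval v p = 0 := by
  constructor
  · intro hv p hp
    exact hv _ ⟨isZClosed_setOf_eval_eq_zero p, fun x hx => by simpa using hp x hx⟩
  · rintro h _ ⟨⟨I, rfl⟩, hS⟩ p hp
    exact h p fun x hx => by simpa using hS hx p hp

lemma subset_zClosure (S : Set (σ → F)) : S ⊆ zClosure S :=
  Set.subset_sInter fun _ h => h.2

lemma zClosure_subset {S C : Set (σ → F)} (hC : IsZClosed C) (h : S ⊆ C) : zClosure S ⊆ C :=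
  Set.sInter_subset_of_mem ⟨hC, h⟩

lemma isZClosed_zClosure (S : Set (σ → F)) : IsZClosed (zClosure S) :=
  ⟨vanishingIdeal F S, Set.ext fun _ => mem_zClosure⟩

lemma IsZClosed.zClosure_eq {C : Set (σ → F)} (hC : IsZClosed C) : zClosure C = C :=
  (zClosure_subset hC subset_rfl).antisymm (subset_zClosure C)

lemma zClosure_mono {S T : Set (σ → F)} (h : S ⊆ T) : zClosure S ⊆ zClosure T :=
  zClosure_subset (isZClosed_zClosure T) (h.trans (subset_zClosure T))

lemma isZClosed_univ : IsZClosed (Set.univ : Set (σ → F)) :=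
  ⟨∅, by simp [zLocus]⟩

lemma isZClosed_iInter {ι : Sort*} {C : ι → Set (σ → F)} (h : ∀ i, IsZClosed (C i)) :
    IsZClosed (⋂ i, C i) := by
  choose I hI using h
  refine ⟨⋃ i, I i, ?_⟩
  ext x
  simp only [hI, zLocus, Set.mem_iInter, Set.mem_iUnion, Set.mem_ofPred_eq]
  exact ⟨fun h p ⟨i, hp⟩ => h i p hp, fun h i p hp => h p ⟨i, hp⟩⟩

end Closure

section Irreducible
variable {F : Type*} [Field F] {σ : Type*}

namespace IsZIrreducible
variable {S C₁ C₂ : Set (σ → F)}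

lemma zClosure (hS : IsZIrreducible S) : IsZIrreducible (zClosure S) := by
  refine ⟨hS.1.mono (subset_zClosure S), fun C₁ C₂ h₁ h₂ hC => ?_⟩
  exact (hS.2 C₁ C₂ h₁ h₂ ((subset_zClosure S).trans hC)).imp
    (zClosure_subset h₁) (zClosure_subset h₂)

lemma exists_notMem_notMem (hS : IsZIrreducible S) (h₁ : IsZClosed C₁) (h₂ : IsZClosed C₂)
    (hSC₁ : ¬S ⊆ C₁) (hSC₂ : ¬S ⊆ C₂) : ∃ x ∈ S, x ∉ C₁ ∧ x ∉ C₂ := by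
  by_contra! h
  refine (hS.2 C₁ C₂ h₁ h₂ fun x hx => ?_).elim hSC₁ hSC₂
  by_cases hx₁ : x ∈ C₁
  exacts [Or.inl hx₁, Or.inr (h x hx hx₁)]

lemma isPrime_vanishingIdeal (hS : IsZIrreducible S) : (vanishingIdeal F S).IsPrime := by
  rw [Ideal.isPrime_iff, Ideal.ne_top_iff_one]
  refine ⟨fun h1 => ?_, fun {p q} hpq => ?_⟩
  · obtain ⟨x, hx⟩ := hS.1
    simpa using h1 x hx
  · refine (hS.2 _ _ (isZClosed_setOf_eval_eq_zero p) (isZClosed_setOf_eval_eq_zero q)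
      fun x hx => by simpa using hpq x hx).imp ?_ ?_
    all_goals exact fun h x hx => by simpa using h hx

end IsZIrreducible

lemma isZIrreducible_univ [Infinite F] : IsZIrreducible (Set.univ : Set (σ → F)) := by
  refine ⟨Set.univ_nonempty, ?_⟩
  rintro _ _ ⟨I, rfl⟩ ⟨J, rfl⟩ hIJ
  by_contra! h
  obtain ⟨⟨x, -, hx⟩, ⟨y, -, hy⟩⟩ := h.imp Set.not_subset.1 Set.not_subset.1
  simp only [zLocus, Set.mem_ofPred_eq, not_forall, exists_prop] at hx hy
  obtain ⟨⟨p, hpI, hp⟩, q, hqJ, hq⟩ := And.intro hx hy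
  have hpq : p * q = 0 := MvPolynomial.funext fun w => by
    rcases hIJ (Set.mem_univ w) with hw | hw
    · simp [hw p hpI]
    · simp [hw q hqJ]
  rcases mul_eq_zero.1 hpq with rfl | rfl
  exacts [hp (map_zero _), hq (map_zero _)]

end Irreducible

section PolynomialMap
variable {F : Type*} [Field F] {σ τ : Type*}

/-- Polynomial maps, i.e. morphisms of affine spaces, between the sets of rational points. -/
def IsPolynomialMap (g : (τ → F) → σ → F) : Prop :=
  ∃ φ : σ → MvPolynomial τ F, ∀ w i, g w i = eval w (φ i)

lemma IsZClosed.preimage {g : (τ → F) → σ → F} {C : Set (σ → F)} (hC : IsZClosed C)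
    (hg : IsPolynomialMap g) : IsZClosed (g ⁻¹' C) := by
  obtain ⟨I, rfl⟩ := hC
  obtain ⟨φ, hφ⟩ := hg
  refine ⟨bind₁ φ '' I, ?_⟩
  ext w
  simp only [zLocus, Set.mem_preimage, Set.mem_ofPred_eq, Set.forall_mem_image]
  exact forall₂_congr fun p _ => by
    rw [show g w = fun i => eval w (φ i) from funext (hφ w)]
    exact Eq.congr_left (eval₂Hom_bind₁ (RingHom.id F) w φ p).symm

lemma IsZIrreducible.image {g : (τ → F) → σ → F} {W : Set (τ → F)} (hW : IsZIrreducible W)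
    (hg : IsPolynomialMap g) : IsZIrreducible (g '' W) := by
  refine ⟨hW.1.image g, fun C₁ C₂ h₁ h₂ h => ?_⟩
  simp only [Set.image_subset_iff, Set.preimage_union] at h ⊢
  exact hW.2 _ _ (h₁.preimage hg) (h₂.preimage hg) h

lemma isPolynomialMap_smul_add (c : F) (u : σ → F) : IsPolynomialMap fun x => c • x + u :=
  ⟨fun i => C c * X i + C (u i), fun x i => by simp⟩

lemma IsCone.zClosure {T : Set (σ → F)} (hT : IsCone T) : IsCone (zClosure T) := fun c x hx => by
  have h : T ⊆ (fun y => c • y + 0) ⁻¹' _root_.zClosure T := fun y hy => by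
    simpa using subset_zClosure T (hT c y hy)
  simpa using zClosure_subset
    ((isZClosed_zClosure T).preimage (isPolynomialMap_smul_add c 0)) h hx

end PolynomialMap

section Line
variable {R : Type*} [CommSemiring R] {σ : Type*}

/-- The restriction of polynomials to the parametrized line `t ↦ a + t b`, as polynomials
in `t`. -/
noncomputable def restrictLine (a b : σ → R) : MvPolynomial σ R →ₐ[R] Polynomial R :=
  aeval fun i => Polynomial.C (a i) + Polynomial.C (b i) * Polynomial.X

@[simp]
lemma restrictLine_X (a b : σ → R) (i : σ) :
    restrictLine a b (X i) = Polynomial.C (a i) + Polynomial.C (b i) * Polynomial.X :=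
  aeval_X _ i

lemma eval₂_restrictLine {S : Type*} [CommSemiring S] (φ : R →+* S) (a b : σ → R)
    (f : MvPolynomial σ R) (t : S) :
    (restrictLine a b f).eval₂ φ t = eval₂ φ (fun i => φ (a i) + φ (b i) * t) f := by
  have hcomp : (Polynomial.eval₂RingHom φ t).comp (restrictLine a b : MvPolynomial σ R →+* _) =
      eval₂Hom φ fun i => φ (a i) + φ (b i) * t := by
    ext
    · simp
    · simp
  exact DFunLike.congr_fun hcomp f

lemma eval_restrictLine (a b : σ → R) (f : MvPolynomial σ R) (t : R) :
    (restrictLine a b f).eval t = eval (a + t • b) f := by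
  rw [← Polynomial.eval₂_id, eval₂_restrictLine, eval, coe_eval₂Hom]
  congr 1
  ext i
  simp [mul_comm]

lemma restrictLine_zero_right (a : σ → R) (f : MvPolynomial σ R) :
    restrictLine a 0 f = Polynomial.C (eval a f) := by
  have hcomp : restrictLine a 0 = Polynomial.CAlgHom.comp (aeval a) := by
    ext i
    simp
  simp [hcomp, aeval_eq_eval]

lemma natDegree_restrictLine_le (a b : σ → R) (f : MvPolynomial σ R) :
    (restrictLine a b f).natDegree ≤ f.totalDegree := by
  rw [← mul_one f.totalDegree]
  exact aeval_natDegree_le f le_rfl _ fun i => by compute_degree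

lemma coeff_zero_restrictLine (a b : σ → R) (f : MvPolynomial σ R) :
    (restrictLine a b f).coeff 0 = eval a f := by
  simp [Polynomial.coeff_zero_eq_eval_zero, eval_restrictLine]

lemma coeff_one_restrictLine [Fintype σ] (a b : σ → R) (f : MvPolynomial σ R) :
    (restrictLine a b f).coeff 1 = ∑ i, b i * eval a (pderiv i f) := by
  classical
  induction f using MvPolynomial.induction_on with
  | C r => simp [restrictLine]
  | add p q hp hq =>
    simp only [map_add, Polynomial.coeff_add, hp, hq, mul_add, Finset.sum_add_distrib]
  | mul_X p j hp =>
    have hpderiv (i : σ) : b i * eval a (pderiv i (p * X j)) =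
        b i * eval a (pderiv i p) * a j + if i = j then eval a p * b j else 0 := by
      obtain rfl | hij := eq_or_ne i j
      · simp only [Derivation.leibniz, pderiv_X_self, smul_eq_mul, mul_one, map_add, map_mul,
          eval_X, ↓reduceIte]
        ring
      · simp only [Derivation.leibniz, pderiv_X_of_ne hij.symm, smul_eq_mul, mul_zero, zero_add,
          map_mul, eval_X, hij, ↓reduceIte, add_zero]
        ring
    simp only [map_mul, restrictLine_X, Polynomial.mul_coeff_one, hp, coeff_zero_restrictLine,
      hpderiv, Finset.sum_add_distrib, Finset.sum_mul]
    simp [Polynomial.coeff_C, add_comm]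

lemma reflect_restrictLine_monomial (a b : σ → R) (m : σ →₀ ℕ) (r : R) :
    (restrictLine a b (monomial m r)).reflect m.degree = restrictLine b a (monomial m r) := by
  classical
  obtain ⟨s, rfl⟩ := Multiset.toFinsupp.surjective m
  induction s using Multiset.induction with
  | empty => simp [← C_apply, ← algebraMap_eq]
  | cons i s ih =>
    have hmonomial : monomial (Multiset.toFinsupp (i ::ₘ s)) r =
        X i * monomial (Multiset.toFinsupp s) r := by
      simp [X, monomial_mul, ← Multiset.singleton_add]
    have hX : (restrictLine a b (X i)).reflect 1 = restrictLine b a (X i) := by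
      simp [Polynomial.reflect_add, Polynomial.reflect_C_mul, Polynomial.reflect_C, add_comm,
        Polynomial.reflect_one_X]
    rw [hmonomial, map_mul, map_mul, ← ih, ← hX, ← Polynomial.reflect_mul]
    · simp [← Multiset.singleton_add]
    · exact (natDegree_restrictLine_le a b _).trans (isHomogeneous_X R i).totalDegree_le
    · exact (natDegree_restrictLine_le a b _).trans (totalDegree_monomial_le _ _)

/-- Homogeneity exchanges the base point and the direction of the line, by `t ↦ t⁻¹`. -/
lemma reflect_restrictLine {f : MvPolynomial σ R} {d : ℕ} (hf : f.IsHomogeneous d)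
    (a b : σ → R) : (restrictLine a b f).reflect d = restrictLine b a f := by
  let reflectHom : Polynomial R →+ Polynomial R :=
    ⟨⟨Polynomial.reflect d, Polynomial.reflect_zero⟩, fun p q => Polynomial.reflect_add p q d⟩
  change reflectHom (restrictLine a b f) = _
  rw [f.as_sum, map_sum (restrictLine a b), map_sum (restrictLine b a), map_sum reflectHom]
  refine Finset.sum_congr rfl fun m hm => ?_
  have hd : m.degree = d := by
    rw [Finsupp.degree_eq_weight_one]
    exact hf (mem_support_iff.1 hm)
  rw [← reflect_restrictLine_monomial a b, hd]
  rfl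

lemma coeff_restrictLine {f : MvPolynomial σ R} {d : ℕ} (hf : f.IsHomogeneous d)
    (a b : σ → R) : (restrictLine a b f).coeff d = eval b f := by
  rw [← coeff_zero_restrictLine b a, ← reflect_restrictLine hf a b, Polynomial.coeff_reflect,
    Polynomial.revAt_zero]

lemma coeff_restrictLine_of_succ [Fintype σ] {f : MvPolynomial σ R} {d : ℕ}
    (hf : f.IsHomogeneous (d + 1)) (a b : σ → R) :
    (restrictLine a b f).coeff d = ∑ i, a i * eval b (pderiv i f) := by
  rw [← coeff_one_restrictLine, ← reflect_restrictLine hf a b, Polynomial.coeff_reflect,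
    Polynomial.revAt_le (by omega), Nat.add_sub_cancel]

end Line

section Cone
variable {F : Type*} [Field F] {σ : Type*}

lemma coeff_restrictLine_zero_left (x : σ → F) (f : MvPolynomial σ F) (i : ℕ) :
    (restrictLine 0 x f).coeff i = eval x (homogeneousComponent i f) := by
  have hcomponent (j : ℕ) : restrictLine 0 x (homogeneousComponent j f) =
      Polynomial.C (eval x (homogeneousComponent j f)) * Polynomial.X ^ j := by
    rw [← reflect_restrictLine (homogeneousComponent_isHomogeneous j f), restrictLine_zero_right,
      Polynomial.reflect_C]
  conv_lhs => rw [← sum_homogeneousComponent f, map_sum]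
  simp only [hcomponent, Polynomial.finsetSum_coeff, Polynomial.coeff_C_mul_X_pow,
    Finset.sum_ite_eq, Finset.mem_range]
  split_ifs with hi
  · rfl
  · rw [homogeneousComponent_eq_zero _ _ (by omega), map_zero]

lemma homogeneousComponent_mem_vanishingIdeal [Infinite F] {T : Set (σ → F)} (hT : IsCone T)
    {f : MvPolynomial σ F} (hf : f ∈ vanishingIdeal F T) (i : ℕ) :
    homogeneousComponent i f ∈ vanishingIdeal F T := fun x hx => by
  have hline : restrictLine 0 x f = 0 := Polynomial.funext fun t => by
    rw [eval_restrictLine, zero_add, Polynomial.eval_zero]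
    simpa using hf _ (hT t x hx)
  rw [aeval_eq_eval, ← coeff_restrictLine_zero_left, hline, Polynomial.coeff_zero]

lemma exists_isHomogeneous_eval_ne_zero [Infinite F] {T : Set (σ → F)} (hT : IsCone T)
    {v : σ → F} (hv : v ∉ zClosure T) :
    ∃ d, ∃ h ∈ vanishingIdeal F T, h.IsHomogeneous d ∧ eval v h ≠ 0 := by
  contrapose! hv
  refine mem_zClosure.2 fun p hp => ?_
  rw [← sum_homogeneousComponent p, map_sum]
  exact Finset.sum_eq_zero fun d _ => hv d _ (homogeneousComponent_mem_vanishingIdeal hT hp d)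
    (homogeneousComponent_isHomogeneous d p)

end Cone

section Extension
open scoped Polynomial
variable {A F : Type*} [CommRing A] [Field F]

lemma map_mapRingHom_ne_top {ψ : A →+* F} (hψ : Function.Surjective ψ) {K : Ideal A[X]}
    (hK : K.comap Polynomial.C ≤ RingHom.ker ψ) {p : A[X]} (hp : p ∈ K) {m : ℕ}
    (hpm : p.natDegree ≤ m) (hlead : ψ (p.coeff m) ≠ 0) :
    K.map (Polynomial.mapRingHom ψ) ≠ ⊤ := by
  intro htop
  obtain ⟨q, hq, hq1⟩ := (Ideal.mem_map_iff_of_surjective _ (Polynomial.map_surjective ψ hψ)).1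
    ((Ideal.eq_top_iff_one _).1 htop)
  -- the resultant of `p` and `q` lies in `K`, while `q` specializes to `1`
  obtain ⟨a, b, -, -, hab⟩ := Polynomial.exists_mul_add_mul_eq_C_resultant
    (n := q.natDegree + 1) p q hpm (Nat.le_succ _) (Or.inr (Nat.succ_ne_zero _))
  have hmem : Polynomial.resultant p q m (q.natDegree + 1) ∈ K.comap Polynomial.C := by
    rw [Ideal.mem_comap, ← hab]
    exact K.add_mem (K.mul_mem_right _ hp) (K.mul_mem_right _ hq)
  have hres := hK hmem
  rw [RingHom.mem_ker, ← Polynomial.resultant_map_map, ← Polynomial.coe_mapRingHom ψ, hq1,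
    Polynomial.resultant_one_right, Polynomial.coe_mapRingHom, Polynomial.coeff_map] at hres
  exact hlead (eq_zero_of_pow_eq_zero hres)

/-- The extension theorem of elimination theory. -/
lemma exists_forall_eval₂_eq_zero [IsAlgClosed F] {ψ : A →+* F} (hψ : Function.Surjective ψ)
    {K : Ideal A[X]} (hK : K.comap Polynomial.C ≤ RingHom.ker ψ) {p : A[X]} (hp : p ∈ K)
    {m : ℕ} (hpm : p.natDegree ≤ m) (hlead : ψ (p.coeff m) ≠ 0) :
    ∃ t : F, ∀ q ∈ K, q.eval₂ ψ t = 0 := by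
  have hne := map_mapRingHom_ne_top hψ hK hp hpm hlead
  obtain ⟨d, hd⟩ := (IsPrincipalIdealRing.principal (K.map (Polynomial.mapRingHom ψ))).principal
  obtain ⟨t, ht⟩ := IsAlgClosed.exists_root d fun hdeg => hne <|
    hd.trans (Ideal.span_singleton_eq_top.2 (Polynomial.isUnit_iff_degree_eq_zero.2 hdeg))
  refine ⟨t, fun q hq => ?_⟩
  have hqd := Ideal.mem_map_of_mem (Polynomial.mapRingHom ψ) hq
  rw [hd, Ideal.submodule_span_eq, Ideal.mem_span_singleton] at hqd
  rw [← Polynomial.eval_map, ← Polynomial.coe_mapRingHom]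
  exact ht.dvd hqd

end Extension

section Incidence
open scoped Pointwise Polynomial
variable {F : Type*} [Field F] {σ : Type*}

/-- The ideal of the polynomials in `X` over the coordinate ring of affine space which vanish at
all pairs `(w, t)` such that `w + t z ∈ T`. -/
noncomputable def incidenceIdeal (T : Set (σ → F)) (z : σ → F) : Ideal (MvPolynomial σ F)[X] :=
  ⨅ (w : σ → F) (t : F) (_ : w + t • z ∈ T), RingHom.ker (Polynomial.eval₂RingHom (eval w) t)

lemma mem_incidenceIdeal {T : Set (σ → F)} {z : σ → F} {q : (MvPolynomial σ F)[X]} :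
    q ∈ incidenceIdeal T z ↔ ∀ w t, w + t • z ∈ T → q.eval₂ (eval w) t = 0 := by
  simp [incidenceIdeal]

lemma comap_C_incidenceIdeal_le (T : Set (σ → F)) (z : σ → F) :
    (incidenceIdeal T z).comap Polynomial.C ≤
      vanishingIdeal F (T + (Submodule.span F {z} : Set (σ → F))) := by
  rintro p hp _ ⟨x, hx, _, hu, rfl⟩
  obtain ⟨t, rfl⟩ := Submodule.mem_span_singleton.1 hu
  simpa [aeval_eq_eval] using mem_incidenceIdeal.1 hp (x + t • z) (-t) (by simpa using hx)

lemma eval₂_restrictLine_X (z w : σ → F) (g : MvPolynomial σ F) (t : F) :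
    (restrictLine X (C ∘ z) (map C g)).eval₂ (eval w) t = eval (w + t • z) g := by
  rw [eval₂_restrictLine, eval₂_map, eval, coe_eval₂Hom]
  congr 1
  · ext
    simp
  · ext i
    simp [mul_comm]

lemma restrictLine_mem_incidenceIdeal {T : Set (σ → F)} (z : σ → F) {g : MvPolynomial σ F}
    (hg : g ∈ vanishingIdeal F T) : restrictLine X (C ∘ z) (map C g) ∈ incidenceIdeal T z :=
  mem_incidenceIdeal.2 fun w t hw => by simpa [eval₂_restrictLine_X] using hg _ hw

/-- Intersecting the lines through `w` parallel to `z` with the equation `f` of `T` gives an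
equation for `t` whose leading coefficient is the derivative of `f` at `z` along `w`, because `f`
vanishes at `z`. -/
lemma exists_eq_add_smul_of_mem_zClosure [IsAlgClosed F] [Fintype σ] {T : Set (σ → F)}
    {z v : σ → F} (hz : z ∈ T) (hv : v ∈ zClosure (T + (Submodule.span F {z} : Set (σ → F))))
    {f : MvPolynomial σ F} (hf : f ∈ vanishingIdeal F T) {d : ℕ} (hfd : f.IsHomogeneous (d + 1))
    (hdf : ∑ i, v i * eval z (pderiv i f) ≠ 0) :
    ∃ x ∈ zClosure T, ∃ t : F, v = x + t • z := by
  have hsurj : Function.Surjective (eval v) := fun c => ⟨C c, eval_C c⟩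
  have hker : (incidenceIdeal T z).comap Polynomial.C ≤ RingHom.ker (eval v) :=
    (comap_C_incidenceIdeal_le T z).trans fun p hp => mem_zClosure.1 hv p hp
  have hfd' : (map C f : MvPolynomial σ (MvPolynomial σ F)).IsHomogeneous (d + 1) := hfd.map C
  have heval (g : MvPolynomial σ F) :
      eval (C ∘ z) (map C g : MvPolynomial σ (MvPolynomial σ F)) = C (eval z g) := by
    rw [eval_map, eval₂_comp]
  have hdeg : (restrictLine X (C ∘ z) (map C f)).natDegree ≤ d := by
    refine Polynomial.natDegree_le_pred
      ((natDegree_restrictLine_le _ _ _).trans hfd'.totalDegree_le) ?_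
    rw [coeff_restrictLine hfd', heval, show eval z f = 0 by simpa using hf z hz, C_0]
  have hlead : eval v ((restrictLine X (C ∘ z) (map C f)).coeff d) ≠ 0 := by
    simpa [coeff_restrictLine_of_succ hfd', pderiv_map, heval] using hdf
  obtain ⟨t, ht⟩ := exists_forall_eval₂_eq_zero hsurj hker
    (restrictLine_mem_incidenceIdeal z hf) hdeg hlead
  refine ⟨v + t • z, mem_zClosure.2 fun g hg => ?_, -t, by simp⟩
  rw [← eval₂_restrictLine_X]
  exact ht _ (restrictLine_mem_incidenceIdeal z hg)

end Incidence

section Tangency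
variable {F : Type*} [Field F] [CharZero F] {σ : Type*} [Fintype σ]

lemma eval_eq_zero_of_forall_derivative_mem {T : Set (σ → F)} (hne : T.Nonempty) {v : σ → F}
    (hder : ∀ d, ∀ f ∈ vanishingIdeal F T, f.IsHomogeneous (d + 1) →
      ∑ i, C (v i) * pderiv i f ∈ vanishingIdeal F T)
    {d : ℕ} {f : MvPolynomial σ F} (hf : f ∈ vanishingIdeal F T) (hfd : f.IsHomogeneous d) :
    eval v f = 0 := by
  induction d generalizing f with
  | zero =>
    obtain ⟨x, hx⟩ := hne
    obtain ⟨c, rfl⟩ : ∃ c, f = C c :=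
      ⟨_, totalDegree_eq_zero_iff_eq_C.1 ((totalDegree_zero_iff_isHomogeneous σ).2 hfd)⟩
    simpa using hf x hx
  | succ d ih =>
    have hderd : (∑ i, C (v i) * pderiv i f).IsHomogeneous d :=
      IsHomogeneous.sum _ _ _ fun i _ => by
        simpa using (isHomogeneous_C σ (v i)).mul (hfd.pderiv (i := i))
    have hzero := ih (hder d f hf hfd) hderd
    have heuler := congrArg (eval v) hfd.sum_X_mul_pderiv
    simp only [map_sum, map_mul, eval_X, eval_C, nsmul_eq_mul, map_natCast] at hzero heuler
    rw [hzero] at heuler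
    exact (mul_eq_zero.1 heuler.symm).resolve_left (Nat.cast_ne_zero.2 d.succ_ne_zero)

/-- By Euler's identity, an equation of least degree among those which do not vanish at `v`
can be chosen for `f`. -/
lemma exists_derivative_notMem_vanishingIdeal {T : Set (σ → F)} (hne : T.Nonempty)
    (hT : IsCone T) {v : σ → F} (hv : v ∉ zClosure T) :
    ∃ d, ∃ f ∈ vanishingIdeal F T, f.IsHomogeneous (d + 1) ∧
      ∑ i, C (v i) * pderiv i f ∉ vanishingIdeal F T := by
  by_contra! hder
  obtain ⟨d, h, hh, hhd, hhv⟩ := exists_isHomogeneous_eval_ne_zero hT hv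
  exact hhv (eval_eq_zero_of_forall_derivative_mem hne hder hh hhd)

end Tangency

section Projection
variable {F : Type*} [Field F] {σ : Type*}

/-- The polynomials invariant under the translations by multiples of `v`, i.e. the functions on
the target of the projection along `v`. -/
def translationInvariants (v : σ → F) : Subalgebra F (MvPolynomial σ F) where
  carrier := {a | ∀ x, ∀ t : F, eval (x + t • v) a = eval x a}
  mul_mem' ha hb x t := by rw [map_mul, map_mul, ha, hb]
  add_mem' ha hb x t := by rw [map_add, map_add, ha, hb]
  algebraMap_mem' c x t := by simp [algebraMap_eq]

lemma X_sub_mem_translationInvariants {v : σ → F} {j : σ} (hj : v j ≠ 0) (i : σ) :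
    X i - C (v i / v j) * X j ∈ translationInvariants v := fun x t => by
  simp only [map_sub, map_mul, eval_X, eval_C, Pi.add_apply, Pi.smul_apply, smul_eq_mul]
  field_simp
  ring

/-- The restriction of `h` to a line with direction `v` has leading coefficient `eval v h`. -/
lemma isAlgebraic_of_aeval_eq_zero {A B : Type*} [CommRing A] [Nontrivial A] [CommRing B]
    [Algebra F A] [Algebra F B] [Algebra A B] [IsScalarTower F A B] {h : MvPolynomial σ F}
    {d : ℕ} (hd : h.IsHomogeneous d) {v : σ → F} (hv : eval v h ≠ 0) (z : σ → A) {τ : B}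
    (hz : aeval (fun i => algebraMap A B (z i) + algebraMap F B (v i) * τ) h = 0) :
    IsAlgebraic A τ := by
  refine ⟨restrictLine z (algebraMap F A ∘ v) (map (algebraMap F A) h), fun h0 => ?_, ?_⟩
  · have hcoeff := coeff_restrictLine (hd.map (algebraMap F A)) z (algebraMap F A ∘ v)
    rw [h0, Polynomial.coeff_zero, eval_map, ← eval₂_comp] at hcoeff
    exact hv ((algebraMap F A).injective (hcoeff.symm.trans (map_zero _).symm))
  · rw [Polynomial.aeval_def, eval₂_restrictLine, eval₂_map, ← hz, aeval_def,
      ← IsScalarTower.algebraMap_eq]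
    simp only [Function.comp_apply, ← IsScalarTower.algebraMap_apply]

/-- The projection of the closure of `T` along `v` is generically finite. -/
lemma isAlgebraic_map_translationInvariants [Infinite F] {T : Set (σ → F)}
    (hI : (vanishingIdeal F T).IsPrime) (hT : IsCone T) {v : σ → F} (hv : v ∉ zClosure T)
    (hv0 : v ≠ 0) (p : MvPolynomial σ F) :
    IsAlgebraic ((translationInvariants v).map (Ideal.Quotient.mkₐ F (vanishingIdeal F T)))
      (Ideal.Quotient.mkₐ F (vanishingIdeal F T) p) := by
  obtain ⟨j, hj⟩ := Function.ne_iff.1 hv0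
  obtain ⟨d, h, hhI, hd, hhv⟩ := exists_isHomogeneous_eval_ne_zero hT hv
  set π := Ideal.Quotient.mkₐ F (vanishingIdeal F T)
  let z (i : σ) : (translationInvariants v).map π :=
    ⟨π (X i - C (v i / v j) * X j), _, X_sub_mem_translationInvariants hj i, rfl⟩
  set τ := π (C (v j)⁻¹ * X j) with hτ_def
  have hπC (c : F) : π (C c) = algebraMap F _ c := π.commutes c
  have hX (i : σ) : π (X i) = z i + algebraMap F _ (v i) * τ := by
    rw [← hπC, hτ_def, ← map_mul, ← map_add]
    congr 1
    rw [div_eq_mul_inv, C_mul]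
    ring
  have hτ : IsAlgebraic ((translationInvariants v).map π) τ := by
    refine isAlgebraic_of_aeval_eq_zero hd hhv z ?_
    have hπ : π = aeval fun i => (z i : _ ⧸ vanishingIdeal F T) + algebraMap F _ (v i) * τ := by
      ext i
      rw [hX, aeval_X]
    exact (DFunLike.congr_fun hπ h).symm.trans (Ideal.Quotient.eq_zero_iff_mem.2 hhI)
  have hconst (c : F) : IsAlgebraic ((translationInvariants v).map π)
      (algebraMap F (_ ⧸ vanishingIdeal F T) c) := by
    rw [IsScalarTower.algebraMap_apply F ((translationInvariants v).map π)]
    exact isAlgebraic_algebraMap _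
  induction p using MvPolynomial.induction_on with
  | C c => exact hπC c ▸ hconst c
  | add p q hp hq => exact map_add π p q ▸ hp.add hq
  | mul_X p i hp =>
    rw [map_mul, hX]
    exact hp.mul ((isAlgebraic_algebraMap (z i)).add ((hconst _).mul hτ))

lemma exists_mem_translationInvariants [Infinite F] {T : Set (σ → F)}
    (hI : (vanishingIdeal F T).IsPrime) (hT : IsCone T) {v : σ → F} (hv : v ∉ zClosure T)
    {g : MvPolynomial σ F} (hg : g ∉ vanishingIdeal F T) :
    ∃ a ∈ translationInvariants v, a ∉ vanishingIdeal F T ∧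
      ∀ x ∈ zClosure T, eval x g = 0 → eval x a = 0 := by
  obtain rfl | hv0 := eq_or_ne v 0
  · exact ⟨g, by simp [translationInvariants], hg, fun x _ hx => hx⟩
  have hg0 : Ideal.Quotient.mkₐ F (vanishingIdeal F T) g ≠ 0 :=
    fun h => hg (Ideal.Quotient.eq_zero_iff_mem.1 h)
  have halg := isAlgebraic_map_translationInvariants hI hT hv hv0 g
  obtain ⟨⟨_, a, ha, rfl⟩, ha0, b, hb⟩ :=
    halg.exists_nonzero_dvd (mem_nonZeroDivisors_of_ne_zero hg0)
  refine ⟨a, ha, fun haI => ha0 (Subtype.ext (Ideal.Quotient.eq_zero_iff_mem.2 haI)),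
    fun x hx hgx => ?_⟩
  obtain ⟨b, rfl⟩ := Ideal.Quotient.mk_surjective b
  have hab : a - g * b ∈ vanishingIdeal F T := (Ideal.Quotient.mk_eq_mk_iff_sub_mem _ _).1 hb
  simpa [hgx] using mem_zClosure.1 hx _ hab

end Projection

section Chevalley
variable {F : Type*} [Field F] {σ τ : Type*}

lemma exists_notMem_forall_le_mem {R : Type*} [CommRing R] {s : Set (PrimeSpectrum R)}
    (hs : Topology.IsConstructible s) {p : PrimeSpectrum R} (hp : p ∈ s) :
    ∃ g ∉ p.asIdeal, ∀ q, p ≤ q → g ∉ q.asIdeal → q ∈ s := by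
  obtain ⟨S, rfl⟩ := PrimeSpectrum.exists_constructibleSetData_iff.2 hs
  simp only [PrimeSpectrum.ConstructibleSetData.toSet, Set.mem_iUnion] at hp ⊢
  obtain ⟨D, hDS, hpg, hpf⟩ := hp
  refine ⟨D.f, by simpa [PrimeSpectrum.mem_zeroLocus] using hpf, fun q hpq hq => ⟨D, hDS, ?_, ?_⟩⟩
  · exact fun r hr => hpq (hpg hr)
  · simpa [PrimeSpectrum.mem_zeroLocus] using hq

lemma IsZClosed.exists_mem_le_vanishingIdeal [IsAlgClosed F] [Finite σ] {W : Set (σ → F)}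
    (hW : IsZClosed W) {P : Ideal (MvPolynomial σ F)} (hP : P ≠ ⊤) (hWP : vanishingIdeal F W ≤ P) :
    ∃ w ∈ W, P ≤ vanishingIdeal F {w} := by
  obtain ⟨M, hM, hPM⟩ := P.exists_le_maximal hP
  obtain ⟨w, rfl⟩ := isMaximal_iff_eq_vanishingIdeal_singleton.1 hM
  refine ⟨w, ?_, hPM⟩
  rw [← hW.zClosure_eq, mem_zClosure]
  exact fun p hp => by simpa using hPM (hWP hp)

/-- Chevalley's theorem for the set of rational points. -/
lemma exists_notMem_vanishingIdeal_image [IsAlgClosed F] [Finite σ] [Finite τ]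
    {W : Set (τ → F)} (hW : IsZClosed W) (hWi : IsZIrreducible W) {φ : (τ → F) → σ → F}
    (hφ : IsPolynomialMap φ) :
    ∃ g ∉ vanishingIdeal F (φ '' W), ∀ x ∈ zClosure (φ '' W), eval x g ≠ 0 → x ∈ φ '' W := by
  obtain ⟨f, hf⟩ := hφ
  have heval (w : τ → F) (p : MvPolynomial σ F) : eval w (bind₁ f p) = eval (φ w) p := by
    rw [show φ w = fun i => eval w (f i) from funext (hf w)]
    exact eval₂Hom_bind₁ (RingHom.id F) w f p
  let P : PrimeSpectrum (MvPolynomial τ F) := ⟨vanishingIdeal F W, hWi.isPrime_vanishingIdeal⟩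
  have hcomap : (PrimeSpectrum.comap (bind₁ f : MvPolynomial σ F →+* _) P).asIdeal =
      vanishingIdeal F (φ '' W) := by
    ext p
    simp [P, heval, aeval_eq_eval]
  have hfp : (bind₁ f : MvPolynomial σ F →+* MvPolynomial τ F).FinitePresentation := by
    refine RingHom.FinitePresentation.of_finiteType.1
      (RingHom.FiniteType.of_comp_finiteType (f := algebraMap F (MvPolynomial σ F)) ?_)
    rw [AlgHom.comp_algebraMap, RingHom.finiteType_algebraMap]
    infer_instance
  have hconstr : Topology.IsConstructible
      (PrimeSpectrum.zeroLocus (P.asIdeal : Set (MvPolynomial τ F))) :=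
    .of_compl <| (TopologicalSpace.NoetherianSpace.isCompact _).isConstructible
      (PrimeSpectrum.isClosed_zeroLocus _).isOpen_compl
  obtain ⟨g, hg, hgen⟩ := exists_notMem_forall_le_mem
    (PrimeSpectrum.isConstructible_comap_image hfp hconstr)
    (Set.mem_image_of_mem _ ((PrimeSpectrum.mem_zeroLocus P _).2 subset_rfl))
  refine ⟨g, hcomap ▸ hg, fun x hx hgx => ?_⟩
  obtain ⟨Q, hPQ, hQ⟩ := hgen ⟨vanishingIdeal F {x}, inferInstance⟩
    (fun p hp => by simpa using mem_zClosure.1 hx p (hcomap ▸ hp)) (by simpa using hgx)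
  obtain ⟨w, hw, hQw⟩ := hW.exists_mem_le_vanishingIdeal Q.isPrime.ne_top hPQ
  refine ⟨w, hw, funext fun i => ?_⟩
  have hXi : X i - C (x i) ∈ (PrimeSpectrum.comap (bind₁ f : MvPolynomial σ F →+* _) Q).asIdeal :=
    hQ ▸ by simp
  simpa [sub_eq_zero, hf] using hQw hXi

end Chevalley

section Parametrized
open scoped Pointwise
variable {F : Type*} [Field F] {σ : Type*}

section Product
variable {τ₁ τ₂ : Type*}

lemma isPolynomialMap_comp_inl :
    IsPolynomialMap fun w : τ₁ ⊕ τ₂ → F => w ∘ Sum.inl :=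
  ⟨fun i => X (Sum.inl i), fun w i => by simp⟩

lemma isPolynomialMap_comp_inr :
    IsPolynomialMap fun w : τ₁ ⊕ τ₂ → F => w ∘ Sum.inr :=
  ⟨fun i => X (Sum.inr i), fun w i => by simp⟩

lemma isPolynomialMap_sumElim_left (b : τ₂ → F) :
    IsPolynomialMap fun a : τ₁ → F => Sum.elim a b :=
  ⟨Sum.elim X fun j => C (b j), fun a i => by cases i <;> simp⟩

lemma isPolynomialMap_sumElim_right (a : τ₁ → F) :
    IsPolynomialMap fun b : τ₂ → F => Sum.elim a b :=
  ⟨Sum.elim (fun i => C (a i)) X, fun b i => by cases i <;> simp⟩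

variable {W₁ : Set (τ₁ → F)} {W₂ : Set (τ₂ → F)}

lemma IsZClosed.prod (h₁ : IsZClosed W₁) (h₂ : IsZClosed W₂) :
    IsZClosed {w : τ₁ ⊕ τ₂ → F | w ∘ Sum.inl ∈ W₁ ∧ w ∘ Sum.inr ∈ W₂} := by
  have hprod : {w : τ₁ ⊕ τ₂ → F | w ∘ Sum.inl ∈ W₁ ∧ w ∘ Sum.inr ∈ W₂} =
      ⋂ b : Bool, cond b ((· ∘ Sum.inl) ⁻¹' W₁) ((· ∘ Sum.inr) ⁻¹' W₂) := Set.inter_eq_iInter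
  rw [hprod]
  exact isZClosed_iInter <| Bool.forall_bool.2
    ⟨h₂.preimage isPolynomialMap_comp_inr, h₁.preimage isPolynomialMap_comp_inl⟩

lemma IsZIrreducible.prod (h₁ : IsZIrreducible W₁) (h₂ : IsZIrreducible W₂) :
    IsZIrreducible {w : τ₁ ⊕ τ₂ → F | w ∘ Sum.inl ∈ W₁ ∧ w ∘ Sum.inr ∈ W₂} := by
  obtain ⟨a₀, ha₀⟩ := h₁.1
  obtain ⟨b₀, hb₀⟩ := h₂.1
  refine ⟨⟨Sum.elim a₀ b₀, by simpa using ⟨ha₀, hb₀⟩⟩, fun C₁ C₂ hC₁ hC₂ hC => ?_⟩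
  let slice (C : Set (τ₁ ⊕ τ₂ → F)) : Set (τ₁ → F) := ⋂ b : W₂, (Sum.elim · b.1) ⁻¹' C
  have mem_slice (C : Set (τ₁ ⊕ τ₂ → F)) (a : τ₁ → F) :
      a ∈ slice C ↔ ∀ b ∈ W₂, Sum.elim a b ∈ C := by simp [slice]
  have isZClosed_slice {C : Set (τ₁ ⊕ τ₂ → F)} (hC : IsZClosed C) : IsZClosed (slice C) :=
    isZClosed_iInter fun b => hC.preimage (isPolynomialMap_sumElim_left b.1)
  have subset_of_slice {C : Set (τ₁ ⊕ τ₂ → F)} (h : W₁ ⊆ slice C) :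
      {w : τ₁ ⊕ τ₂ → F | w ∘ Sum.inl ∈ W₁ ∧ w ∘ Sum.inr ∈ W₂} ⊆ C := fun w hw => by
    simpa using (mem_slice C _).1 (h hw.1) _ hw.2
  refine (h₁.2 _ _ (isZClosed_slice hC₁) (isZClosed_slice hC₂) fun a ha => ?_).imp
    subset_of_slice subset_of_slice
  have hfiber := h₂.2 _ _ (hC₁.preimage (isPolynomialMap_sumElim_right a))
    (hC₂.preimage (isPolynomialMap_sumElim_right a)) fun b hb => hC (by simpa using ⟨ha, hb⟩)
  exact hfiber.imp (mem_slice C₁ a).2 (mem_slice C₂ a).2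

end Product

/-- Images of irreducible affine varieties under polynomial maps: a class of irreducible sets
which, unlike that of irreducible closed sets, is stable under sums. -/
def IsParametrized (T : Set (σ → F)) : Prop :=
  ∃ (τ : Type) (_ : Finite τ) (W : Set (τ → F)) (g : (τ → F) → σ → F),
    IsZClosed W ∧ IsZIrreducible W ∧ IsPolynomialMap g ∧ g '' W = T

namespace IsParametrized
variable {T T₁ T₂ : Set (σ → F)}

lemma isZIrreducible (hT : IsParametrized T) : IsZIrreducible T := by
  obtain ⟨_, _, _, g, -, hW, hg, rfl⟩ := hT
  exact hW.image hg

lemma exists_notMem_vanishingIdeal [IsAlgClosed F] [Finite σ] (hT : IsParametrized T) :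
    ∃ g ∉ vanishingIdeal F T, ∀ x ∈ zClosure T, eval x g ≠ 0 → x ∈ T := by
  obtain ⟨_, _, _, g, hW, hWi, hg, rfl⟩ := hT
  exact exists_notMem_vanishingIdeal_image hW hWi hg

lemma span_singleton [Infinite F] (y : σ → F) :
    IsParametrized (Submodule.span F {y} : Set (σ → F)) := by
  refine ⟨Unit, inferInstance, Set.univ, fun t => t () • y, isZClosed_univ, isZIrreducible_univ,
    ⟨fun i => X () * C (y i), fun t i => by simp⟩, ?_⟩
  ext x
  simp only [Set.image_univ, Set.mem_range, SetLike.mem_coe, Submodule.mem_span_singleton]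
  exact ⟨fun ⟨t, ht⟩ => ⟨t (), ht⟩, fun ⟨t, ht⟩ => ⟨fun _ => t, ht⟩⟩

lemma add (h₁ : IsParametrized T₁) (h₂ : IsParametrized T₂) : IsParametrized (T₁ + T₂) := by
  obtain ⟨τ₁, _, W₁, g₁, hc₁, hi₁, ⟨φ₁, hφ₁⟩, rfl⟩ := h₁
  obtain ⟨τ₂, _, W₂, g₂, hc₂, hi₂, ⟨φ₂, hφ₂⟩, rfl⟩ := h₂
  refine ⟨τ₁ ⊕ τ₂, inferInstance, _, fun w => g₁ (w ∘ Sum.inl) + g₂ (w ∘ Sum.inr),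
    hc₁.prod hc₂, hi₁.prod hi₂,
    ⟨fun i => rename Sum.inl (φ₁ i) + rename Sum.inr (φ₂ i), fun w i => by
      simp [eval_rename, hφ₁, hφ₂]⟩, ?_⟩
  ext x
  simp only [Set.mem_add, Set.exists_mem_image]
  constructor
  · rintro ⟨w, ⟨hw₁, hw₂⟩, rfl⟩
    exact ⟨_, hw₁, _, hw₂, rfl⟩
  · rintro ⟨a, ha, b, hb, rfl⟩
    exact ⟨Sum.elim a b, by simpa using ⟨ha, hb⟩, by simp⟩

end IsParametrized

lemma IsZClosed.isParametrized {ι : Type} [Finite ι] {W : Set (ι → F)} (hW : IsZClosed W)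
    (hWi : IsZIrreducible W) : IsParametrized W :=
  ⟨ι, inferInstance, W, id, hW, hWi, ⟨X, fun w i => by simp⟩, Set.image_id W⟩

end Parametrized

section Join
open scoped Pointwise
variable {F : Type*} [Field F] [IsAlgClosed F] [CharZero F] {σ : Type*} [Finite σ]

/-- A general `z ∈ T` gives `v = x + t • z` with `x` in the closure of `T`. The point
`-t⁻¹ • x = z - t⁻¹ • v` is general as well, since it has the same projection along `v` as `z`;
hence it belongs to `T` itself. -/
lemma IsParametrized.mem_add_self {T : Set (σ → F)} (hP : IsParametrized T) (hT : IsCone T)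
    {v : σ → F} (hv : v ∉ zClosure T) {C : Set (σ → F)} (hC : IsZClosed C) (hTC : ¬T ⊆ C)
    (hjoin : ∀ z ∈ T, z ∉ C → v ∈ zClosure (T + (Submodule.span F {z} : Set (σ → F)))) :
    v ∈ T + T := by
  cases nonempty_fintype σ
  have hI := hP.isZIrreducible.isPrime_vanishingIdeal
  obtain ⟨g, hg, hgT⟩ := hP.exists_notMem_vanishingIdeal
  obtain ⟨a, hav, ha, hag⟩ := exists_mem_translationInvariants hI hT hv hg
  obtain ⟨d, f, hf, hfd, hder⟩ :=
    exists_derivative_notMem_vanishingIdeal hP.isZIrreducible.1 hT hv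
  obtain ⟨z, hz, hzC, hzfa⟩ := hP.isZIrreducible.exists_notMem_notMem hC
    (isZClosed_setOf_eval_eq_zero ((∑ i, MvPolynomial.C (v i) * pderiv i f) * a)) hTC
    fun h => (hI.mem_or_mem fun x hx => by simpa using h hx).elim hder ha
  obtain ⟨hzf, hza⟩ : eval z (∑ i, MvPolynomial.C (v i) * pderiv i f) ≠ 0 ∧ eval z a ≠ 0 := by
    simpa only [Set.mem_ofPred_eq, map_mul, mul_eq_zero, not_or] using hzfa
  obtain ⟨x, hx, t, rfl⟩ := exists_eq_add_smul_of_mem_zClosure hz (hjoin z hz hzC) hf hfd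
    (by simpa using hzf)
  have ht : t ≠ 0 := by
    rintro rfl
    exact hv (by simpa using hx)
  have hx_eq : -t⁻¹ • x = z + -t⁻¹ • (x + t • z) := by
    rw [smul_add, neg_smul t⁻¹ (t • z), inv_smul_smul₀ ht]
    abel
  have hxT : -t⁻¹ • x ∈ T := by
    have hxc := hT.zClosure (-t⁻¹) x hx
    refine hgT _ hxc fun h0 => hza ?_
    rw [← hav z (-t⁻¹), ← hx_eq]
    exact hag _ hxc h0
  refine Set.add_mem_add ?_ (hT t z hz)
  simpa [smul_smul, ht] using hT (-t) _ hxT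

end Join

section Dichotomy
open scoped Pointwise
variable {F : Type*} [Field F] {σ : Type*}

lemma zClosure_eq_univ_of_add_span_subset {S T : Set (σ → F)} (hS : Submodule.span F S = ⊤)
    (hT : T.Nonempty)
    (h : ∀ y ∈ S, T + (Submodule.span F {y} : Set (σ → F)) ⊆ zClosure T) :
    zClosure T = Set.univ := by
  have add_mem (u : σ → F) (hu : u ∈ Submodule.span F S) :
      ∀ t : F, ∀ m ∈ zClosure T, m + t • u ∈ zClosure T := by
    induction hu using Submodule.span_induction with
    | mem y hy =>
      intro t m hm
      have hsub : T ⊆ (fun x => (1 : F) • x + t • y) ⁻¹' zClosure T := fun x hx => by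
        rw [Set.mem_preimage, one_smul]
        exact h y hy (Set.add_mem_add hx
          (Submodule.smul_mem _ t (Submodule.mem_span_singleton_self y)))
      simpa using zClosure_subset
        ((isZClosed_zClosure T).preimage (isPolynomialMap_smul_add 1 (t • y))) hsub hm
    | zero => simp
    | add a b _ _ ha hb =>
      intro t m hm
      rw [smul_add, ← add_assoc]
      exact hb t _ (ha t m hm)
    | smul c a _ ha =>
      intro t m hm
      rw [smul_smul]
      exact ha _ m hm
  obtain ⟨x, hx⟩ := hT
  refine Set.eq_univ_of_forall fun v => ?_
  simpa using add_mem (v - x) (hS ▸ Submodule.mem_top) 1 x (subset_zClosure T hx)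

lemma IsParametrized.exists_notMem_zClosure_add_span_or_mem_add_self [IsAlgClosed F] [CharZero F]
    [Finite σ] {T : Set (σ → F)} (hP : IsParametrized T) (hT : IsCone T)
    (hspan : Submodule.span F T = ⊤) {v : σ → F} (hv : v ∉ zClosure T) :
    (∃ z ∈ T, ¬T + (Submodule.span F {z} : Set (σ → F)) ⊆ zClosure T ∧
      v ∉ zClosure (T + (Submodule.span F {z} : Set (σ → F)))) ∨ v ∈ T + T := by
  by_contra! ⟨hline, hvT⟩
  obtain ⟨y, hy, hyT⟩ : ∃ y ∈ T, ¬T + (Submodule.span F {y} : Set (σ → F)) ⊆ zClosure T := by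
    by_contra! h
    exact hv (zClosure_eq_univ_of_add_span_subset hspan hP.isZIrreducible.1 h ▸ Set.mem_univ v)
  obtain ⟨_, ⟨m, hm, _, hb, rfl⟩, hmy⟩ := Set.not_subset.1 hyT
  obtain ⟨t, rfl⟩ := Submodule.mem_span_singleton.1 hb
  refine hvT (hP.mem_add_self hT hv
    ((isZClosed_zClosure T).preimage (isPolynomialMap_smul_add t m))
    (Set.not_subset.2 ⟨y, hy, fun h => hmy (by rwa [Set.mem_preimage, add_comm] at h)⟩)
    fun z hz hzC => hline z hz fun hzT => hzC ?_)
  rw [Set.mem_preimage, add_comm]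
  exact hzT (Set.add_mem_add hm (Submodule.smul_mem _ t (Submodule.mem_span_singleton_self z)))

end Dichotomy

section Sums
open scoped Pointwise
variable {F : Type*} [Field F] {σ : Type*} {S : Set (σ → F)}

lemma sumsOf_zero (S : Set (σ → F)) : sumsOf S 0 = {0} := by
  ext v
  simp [sumsOf, eq_comm]

lemma sumsOf_succ (S : Set (σ → F)) (r : ℕ) : sumsOf S (r + 1) = S + sumsOf S r := by
  ext v
  simp only [Set.mem_add, sumsOf, Set.mem_ofPred_eq]
  constructor
  · rintro ⟨f, hf, rfl⟩
    exact ⟨f 0, hf 0, _, ⟨fun i => f i.succ, fun i => hf _, rfl⟩, (Fin.sum_univ_succ f).symm⟩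
  · rintro ⟨x, hx, _, ⟨f, hf, rfl⟩, rfl⟩
    exact ⟨Fin.cons x f, Fin.cases hx hf, by simp [Fin.sum_univ_succ]⟩

lemma sumsOf_one (S : Set (σ → F)) : sumsOf S 1 = S := by
  rw [sumsOf_succ, sumsOf_zero, Set.singleton_zero, add_zero]

lemma sumsOf_add (S : Set (σ → F)) (a b : ℕ) : sumsOf S (a + b) = sumsOf S a + sumsOf S b := by
  induction a with
  | zero => rw [zero_add, sumsOf_zero, Set.singleton_zero, zero_add]
  | succ a ih => rw [add_right_comm, sumsOf_succ, sumsOf_succ, ih, add_assoc]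

lemma sumsOf_mul (S : Set (σ → F)) (r k : ℕ) : sumsOf S (r * k) = sumsOf (sumsOf S k) r := by
  induction r with
  | zero => rw [zero_mul, sumsOf_zero, sumsOf_zero]
  | succ r ih => rw [sumsOf_succ, ← ih, add_mul, one_mul, add_comm, sumsOf_add]

lemma sumsOf_mono (h0 : 0 ∈ S) {a b : ℕ} (hab : a ≤ b) : sumsOf S a ⊆ sumsOf S b := by
  obtain ⟨m, rfl⟩ := Nat.exists_eq_add_of_le hab
  rw [sumsOf_add]
  exact fun x hx => ⟨x, hx, 0, ⟨fun _ => 0, fun _ => h0, by simp⟩, add_zero x⟩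

lemma IsCone.zero_mem (hS : IsCone S) (hne : S.Nonempty) : (0 : σ → F) ∈ S := by
  obtain ⟨x, hx⟩ := hne
  simpa using hS 0 x hx

lemma IsCone.sumsOf (hS : IsCone S) (r : ℕ) : IsCone (sumsOf S r) := by
  rintro t _ ⟨f, hf, rfl⟩
  exact ⟨fun i => t • f i, fun i => hS t _ (hf i), Finset.smul_sum.symm⟩

lemma IsCone.add_submodule (hS : IsCone S) (L : Submodule F (σ → F)) :
    IsCone (S + (L : Set (σ → F))) := by
  rintro t _ ⟨a, ha, b, hb, rfl⟩
  exact ⟨t • a, hS t a ha, t • b, L.smul_mem t hb, (smul_add t a b).symm⟩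

lemma sup_span_singleton_subset_sumsOf (hS : IsCone S) {L : Submodule F (σ → F)} {j : ℕ}
    (hL : (L : Set (σ → F)) ⊆ sumsOf S j) {z : σ → F} (hz : z ∈ S + (L : Set (σ → F))) :
    ((L ⊔ Submodule.span F {z} : Submodule F (σ → F)) : Set (σ → F)) ⊆ sumsOf S (j + 1) := by
  obtain ⟨a, ha, b, hb, rfl⟩ := hz
  rw [Submodule.coe_sup, sumsOf_succ]
  rintro _ ⟨u, hu, _, hw, rfl⟩
  obtain ⟨t, rfl⟩ := Submodule.mem_span_singleton.1 hw
  exact ⟨t • a, hS t a ha, u + t • b, hL (L.add_mem hu (L.smul_mem t hb)), by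
    simp only [smul_add]
    abel⟩

lemma add_submodule_add_self_subset_sumsOf {L : Submodule F (σ → F)} {j : ℕ}
    (hL : (L : Set (σ → F)) ⊆ sumsOf S j) :
    S + (L : Set (σ → F)) + (S + (L : Set (σ → F))) ⊆ sumsOf S (j + 2) := by
  rintro _ ⟨_, ⟨a, ha, b, hb, rfl⟩, _, ⟨a', ha', b', hb', rfl⟩, rfl⟩
  rw [sumsOf_succ, sumsOf_succ]
  exact ⟨a, ha, _, ⟨a', ha', b + b', hL (L.add_mem hb hb'), rfl⟩, by
    dsimp only
    abel⟩

lemma IsParametrized.sumsOf [Infinite F] (hS : IsParametrized S) (r : ℕ) :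
    IsParametrized (sumsOf S r) := by
  induction r with
  | zero => simpa [sumsOf_zero] using IsParametrized.span_singleton (0 : σ → F)
  | succ r ih => exact sumsOf_succ S r ▸ hS.add ih

lemma xRank_le_iff (h0 : 0 ∈ S) {v : σ → F} {r : ℕ} : xRank S v ≤ r ↔ v ∈ sumsOf S r := by
  refine ⟨fun h => ?_, fun h => sInf_le ⟨r, rfl, h⟩⟩
  have hne : {r : ℕ∞ | ∃ s : ℕ, r = s ∧ v ∈ sumsOf S s}.Nonempty := by
    refine Set.nonempty_iff_ne_empty.2 fun hempty => ENat.natCast_ne_top r (top_le_iff.1 ?_)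
    rwa [xRank, hempty, sInf_empty] at h
  obtain ⟨s, hs, hv⟩ := csInf_mem hne
  rw [xRank, hs, Nat.cast_le] at h
  exact sumsOf_mono h0 h hv

lemma secantCone_eq_zClosure_sumsOf (h0 : 0 ∈ S) (k : ℕ) :
    secantCone S k = zClosure (sumsOf S k) :=
  congrArg zClosure (Set.ext fun _ => xRank_le_iff h0)

lemma secantCone_zero (h0 : 0 ∈ S) : secantCone S 0 = {0} := by
  rw [secantCone_eq_zClosure_sumsOf h0, sumsOf_zero]
  exact IsZClosed.zClosure_eq ⟨Set.range X, by ext x; simp [zLocus, funext_iff]⟩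

end Sums

section Dimension
variable {F : Type*} [Field F] {σ : Type*}

lemma zDim_add_one_le {T D : Set (σ → F)} (hD : IsZClosed D) (hDi : IsZIrreducible D)
    (hTD : T ⊂ D) : zDim T + 1 ≤ zDim D := by
  rcases isEmpty_or_nonempty {C : Set (σ → F) // IsZClosed C ∧ IsZIrreducible C ∧ C ⊆ T}
    with hT | hT
  · simp [zDim, Order.krullDim_eq_bot]
  let adjoinTop (o : WithTop {C : Set (σ → F) // IsZClosed C ∧ IsZIrreducible C ∧ C ⊆ T}) :
      {C : Set (σ → F) // IsZClosed C ∧ IsZIrreducible C ∧ C ⊆ D} :=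
    o.recTopCoe ⟨D, hD, hDi, subset_rfl⟩ fun C => ⟨C.1, C.2.1, C.2.2.1, C.2.2.2.trans hTD.1⟩
  have hmono : StrictMono adjoinTop := by
    refine WithTop.strictMono_iff.2 ⟨fun C C' h => h, fun C => ?_⟩
    exact Subtype.mk_lt_mk.2 (lt_of_le_of_lt C.2.2.2 hTD)
  exact Order.krullDim_WithTop.symm.trans_le (Order.krullDim_le_of_strictMono _ hmono)

lemma zDim_le_card [Finite σ] (S : Set (σ → F)) : zDim S ≤ Nat.card σ := by
  let toSpec (C : {C : Set (σ → F) // IsZClosed C ∧ IsZIrreducible C ∧ C ⊆ S}) :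
      (PrimeSpectrum (MvPolynomial σ F))ᵒᵈ :=
    OrderDual.toDual ⟨vanishingIdeal F C.1, C.2.2.1.isPrime_vanishingIdeal⟩
  have hmono : StrictMono toSpec := by
    refine Monotone.strictMono_of_injective (fun C D h => vanishingIdeal_anti_mono h)
      fun C D h => Subtype.ext ?_
    have hCD : vanishingIdeal F C.1 = vanishingIdeal F D.1 :=
      congrArg PrimeSpectrum.asIdeal (OrderDual.toDual.injective h)
    rw [← C.2.1.zClosure_eq, ← D.2.1.zClosure_eq]
    ext x
    rw [mem_zClosure, mem_zClosure, hCD]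
  calc zDim S ≤ Order.krullDim (PrimeSpectrum (MvPolynomial σ F))ᵒᵈ :=
      Order.krullDim_le_of_strictMono _ hmono
    _ = ringKrullDim (MvPolynomial σ F) := Order.krullDim_orderDual
    _ = Nat.card σ := by
      rw [MvPolynomial.ringKrullDim_of_isNoetherianRing, ringKrullDim_eq_zero_of_field, zero_add]

lemma eq_univ_of_card_le_zDim [Infinite F] [Finite σ] {S : Set (σ → F)}
    (hS : (Nat.card σ : WithBot ℕ∞) ≤ zDim S) : S = Set.univ := by
  by_contra hne
  have hlt : zDim S + 1 ≤ zDim (Set.univ : Set (σ → F)) :=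
    zDim_add_one_le isZClosed_univ isZIrreducible_univ (Set.ssubset_univ_iff.2 hne)
  have hcard : (Nat.card σ : WithBot ℕ∞) + 1 ≤ Nat.card σ :=
    (add_le_add_left hS 1).trans (hlt.trans (zDim_le_card _))
  norm_cast at hcard
  exact Nat.not_succ_le_self _ hcard

end Dimension

section Secant
open scoped Pointwise
variable {F : Type*} [Field F] [IsAlgClosed F] [CharZero F] {σ : Type*} [Finite σ]
  {S : Set (σ → F)} {v : σ → F}

/-- As long as `S + L` is enlarged by a line, at the cost of one summand, the dimension of its
closure grows; when this stops, `v` is the sum of two elements of `S + L`. -/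
lemma mem_sumsOf_of_notMem_zClosure_add_submodule (hP : IsParametrized S) (hS : IsCone S)
    (hspan : Submodule.span F S = ⊤) {L : Submodule F (σ → F)}
    (hLP : IsParametrized (S + (L : Set (σ → F)))) {j : ℕ} (hL : (L : Set (σ → F)) ⊆ sumsOf S j)
    (hv : v ∉ zClosure (S + (L : Set (σ → F)))) {i : ℕ}
    (hdim : (Nat.card σ : WithBot ℕ∞) ≤ zDim (zClosure (S + (L : Set (σ → F)))) + i) :
    v ∈ sumsOf S (j + i + 1) := by
  induction i generalizing L j with
  | zero =>
    rw [Nat.cast_zero, add_zero] at hdim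
    exact absurd (eq_univ_of_card_le_zDim hdim ▸ Set.mem_univ v) hv
  | succ i ih =>
    have hST : S ⊆ S + (L : Set (σ → F)) := fun x hx => ⟨x, hx, 0, L.zero_mem, add_zero x⟩
    have hTspan := top_le_iff.1 (hspan.symm.trans_le (Submodule.span_mono hST))
    obtain ⟨z, hz, hzT, hvz⟩ | hvT :=
      hLP.exists_notMem_zClosure_add_span_or_mem_add_self (hS.add_submodule L) hTspan hv
    · have hsup : S + ((L ⊔ Submodule.span F {z} : Submodule F (σ → F)) : Set (σ → F)) =
          S + (L : Set (σ → F)) + (Submodule.span F {z} : Set (σ → F)) := by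
        rw [Submodule.coe_sup, add_assoc]
      have hzP := hLP.add (.span_singleton z)
      have hlt := zDim_add_one_le (isZClosed_zClosure _) hzP.isZIrreducible.zClosure
        ⟨zClosure_mono fun x hx => ⟨x, hx, 0, Submodule.zero_mem _, add_zero x⟩,
          fun h => hzT ((subset_zClosure _).trans h)⟩
      have hdim' := hdim.trans_eq (by rw [Nat.cast_succ, add_comm (i : WithBot ℕ∞), ← add_assoc])
      rw [← add_assoc, add_right_comm j i 1]
      rw [← hsup] at hzP hvz hlt
      exact ih hzP (sup_span_singleton_subset_sumsOf hS hL hz) hvz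
        (hdim'.trans (add_le_add_left hlt _))
    · exact sumsOf_mono (hS.zero_mem hP.isZIrreducible.1) (by omega)
        (add_submodule_add_self_subset_sumsOf hL hvT)

lemma mem_sumsOf_of_notMem_zClosure (hP : IsParametrized S) (hS : IsCone S)
    (hspan : Submodule.span F S = ⊤) (hv : v ∉ zClosure S) {c : ℕ}
    (hdim : (Nat.card σ : WithBot ℕ∞) ≤ zDim (zClosure S) + c) : v ∈ sumsOf S (c + 1) := by
  have hbot : S + ((⊥ : Submodule F (σ → F)) : Set (σ → F)) = S := by simp
  rw [← zero_add c]
  exact mem_sumsOf_of_notMem_zClosure_add_submodule hP hS hspan (L := ⊥) (by rwa [hbot])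
    (by simp [sumsOf_zero]) (by rwa [hbot]) (by rwa [hbot])

lemma xRank_le_of_notMem_secantCone (hP : IsParametrized S) (hS : IsCone S)
    (hspan : Submodule.span F S = ⊤) {k c : ℕ} (hk : k ≠ 0) (hv : v ∉ secantCone S k)
    (hdim : (Nat.card σ : WithBot ℕ∞) ≤ zDim (secantCone S k) + c) :
    xRank S v ≤ ((c + 1) * k : ℕ) := by
  have h0 := hS.zero_mem hP.isZIrreducible.1
  have hSk : S ⊆ sumsOf S k :=
    (sumsOf_one S).symm.subset.trans (sumsOf_mono h0 (Nat.one_le_iff_ne_zero.2 hk))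
  rw [secantCone_eq_zClosure_sumsOf h0] at hv hdim
  rw [xRank_le_iff h0, sumsOf_mul]
  exact mem_sumsOf_of_notMem_zClosure (hP.sumsOf k) (hS.sumsOf k)
    (top_le_iff.1 (hspan.symm.trans_le (Submodule.span_mono hSk))) hv hdim

end Secant

/-- Proposition of the paper. If `σ_k(X)` has codimension `c` in `ℙⁿ`
(so its affine cone has dimension `n + 1 - c`) and `s` is the maximum `X`-rank of points
of `σ_k(X)`, then the maximum `X`-rank is at most `max {s, (c+1)k}`. -/
theorem stmt_5 {F : Type*} [Field F] [IsAlgClosed F] [CharZero F] {n : ℕ}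
    (Xhat : Set (Fin (n + 1) → F))
    (hclosed : IsZClosed Xhat) (hcone : IsCone Xhat)
    (hirr : IsZIrreducible Xhat) (hnondeg : Submodule.span F Xhat = ⊤)
    (k c : ℕ) (hc : c ≤ n)
    (hdim : zDim (secantCone Xhat k) = ((n + 1 - c : ℕ) : ℕ∞))
    (s : ℕ∞)
    (hs : IsGreatest
      {m : ℕ∞ | ∃ v ∈ secantCone Xhat k, v ≠ 0 ∧ xRank Xhat v = m} s)
    (rmax : ℕ∞)
    (hmax : IsGreatest {m : ℕ∞ | ∃ v : Fin (n + 1) → F, v ≠ 0 ∧ xRank Xhat v = m} rmax) :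
    rmax ≤ max s (((c + 1) * k : ℕ) : ℕ∞) := by
  obtain ⟨v, hv0, rfl⟩ := hmax.1
  by_cases hv : v ∈ secantCone Xhat k
  · exact le_max_of_le_left (hs.2 ⟨v, hv, hv0, rfl⟩)
  have hk : k ≠ 0 := by
    rintro rfl
    obtain ⟨w, hw, hw0, -⟩ := hs.1
    rw [secantCone_zero (hcone.zero_mem hirr.1)] at hw
    exact hw0 hw
  refine le_max_of_le_right (xRank_le_of_notMem_secantCone (hclosed.isParametrized hirr) hcone
    hnondeg hk hv ?_)
  rw [hdim, Nat.card_fin]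
  norm_cast
  omega
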